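/- Let μ be a compactly supported Borel probability measure on ℝ with moments m_k := ∫ λ^k dμ(λ) (m_0 := 1). Fix t ≥ 1 and let Φ ∈ ℝ^{t×t} be strictly lower triangular. Then the matrix M := Σ_{i=1}^{t} m_{i−1}·Φ^{i−1} (with Φ^0 := I_t) is invertible, and C := M^{−1}·(Σ_{i=1}^{t} m_i·Φ^{i−1}) is the unique t×t real matrix satisfying ∫ (I_t − λ·Φ)^{−1}·(λ·I_t − C) dμ(λ) = 0 entrywise; moreover this C equals Σ_{i=1}^{t} γ_i·Φ^{i−1}, where (γ_i)_{i≥1} is defined from μ as in the context. -/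

import Mathlib

open MeasureTheory

lemma aux_int (μ : Measure ℝ) [IsProbabilityMeasure μ]
    (K : Set ℝ) (hK : IsCompact K) (hKc : μ Kᶜ = 0) (f : ℝ → ℝ) (hf : Continuous f) :
    Integrable f μ := by
  have h : IntegrableOn f K μ := hf.continuousOn.integrableOn_compact hK
  have hr : μ.restrict K = μ := Measure.restrict_eq_self_of_ae_mem (by
    rw [ae_iff]; exact hKc)
  rwa [IntegrableOn, hr] at h

lemma aux_pow {t : ℕ} (Φ : Matrix (Fin t) (Fin t) ℝ)
    (hΦ : ∀ i j : Fin t, i ≤ j → Φ i j = 0) (k : ℕ) :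
    ∀ i j : Fin t, (i : ℕ) < j + k → (Φ ^ k) i j = 0 := by
  induction k with
  | zero =>
    intro i j h
    rw [pow_zero, Matrix.one_apply_ne]
    rintro rfl
    omega
  | succ k ih =>
    intro i j h
    rw [pow_succ, Matrix.mul_apply]
    apply Finset.sum_eq_zero
    intro l _
    by_cases hl : l ≤ j
    · rw [hΦ l j hl, mul_zero]
    · rw [ih i l (by rw [not_le, Fin.lt_def] at hl; omega), zero_mul]

lemma aux_nil {t : ℕ} (Φ : Matrix (Fin t) (Fin t) ℝ)
    (hΦ : ∀ i j : Fin t, i ≤ j → Φ i j = 0) : Φ ^ t = 0 := by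
  ext i j
  exact aux_pow Φ hΦ t i j (by omega)

lemma aux_mul {R : Type*} [Ring R] [Algebra ℝ R] (A : R) (t : ℕ) (hA : A ^ t = 0)
    (a b : ℕ → ℝ) :
    (∑ i ∈ Finset.range t, a i • A ^ i) * (∑ i ∈ Finset.range t, b i • A ^ i)
      = ∑ n ∈ Finset.range t, (∑ k ∈ Finset.range (n + 1), a k * b (n - k)) • A ^ n := by
  have h := Finset.sum_range_diag_flip t (fun i j => (a i * b j) • A ^ (i + j))
  have h1 : ∑ n ∈ Finset.range t, (∑ k ∈ Finset.range (n + 1), a k * b (n - k)) • A ^ n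
      = ∑ m ∈ Finset.range t, ∑ k ∈ Finset.range (m + 1),
        (a k * b (m - k)) • A ^ (k + (m - k)) := by
    refine Finset.sum_congr rfl fun n _ => ?_
    rw [Finset.sum_smul]
    refine Finset.sum_congr rfl fun k hk => ?_
    rw [Finset.mem_range] at hk
    rw [show k + (n - k) = n by omega]
  rw [h1, h, Finset.sum_mul]
  refine Finset.sum_congr rfl fun i _ => ?_
  rw [Finset.mul_sum]
  symm
  have h2 : ∀ j, a i • A ^ i * b j • A ^ j = (a i * b j) • A ^ (i + j) := by
    intro j
    rw [smul_mul_smul_comm, pow_add]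
  simp only [h2]
  apply Finset.sum_subset
  · intro j hj
    rw [Finset.mem_range] at *
    omega
  · intro j _ hj
    rw [Finset.mem_range] at hj
    rw [pow_eq_zero_of_le (by omega) hA, smul_zero]

lemma aux_inv {t : ℕ} (Φ : Matrix (Fin t) (Fin t) ℝ) (h : Φ ^ t = 0) (x : ℝ) :
    (1 - x • Φ)⁻¹ = ∑ i ∈ Finset.range t, x ^ i • Φ ^ i := by
  apply Matrix.inv_eq_right_inv
  have := mul_neg_geom_sum (x • Φ) t
  rw [smul_pow x Φ t, h, smul_zero, sub_zero] at this
  simpa only [smul_pow] using this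

lemma aux_integral {t : ℕ} (μ : Measure ℝ) [IsProbabilityMeasure μ]
    (K : Set ℝ) (hK : IsCompact K) (hKc : μ Kᶜ = 0)
    (Φ : Matrix (Fin t) (Fin t) ℝ) (h : Φ ^ t = 0) (C : Matrix (Fin t) (Fin t) ℝ)
    (i j : Fin t) :
    (∫ x, (((1 : Matrix (Fin t) (Fin t) ℝ) - x • Φ)⁻¹ *
            (x • (1 : Matrix (Fin t) (Fin t) ℝ) - C)) i j ∂μ) =
    ((∑ i ∈ Finset.range t, (∫ x, x ^ (i + 1) ∂μ) • Φ ^ i) -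
      (∑ i ∈ Finset.range t, (∫ x, x ^ i ∂μ) • Φ ^ i) * C) i j := by
  have h1 : ∀ x : ℝ, (((1 : Matrix (Fin t) (Fin t) ℝ) - x • Φ)⁻¹ *
            (x • (1 : Matrix (Fin t) (Fin t) ℝ) - C)) i j =
      ∑ k ∈ Finset.range t, (x ^ (k + 1) * (Φ ^ k) i j - x ^ k * (Φ ^ k * C) i j) := by
    intro x
    rw [aux_inv Φ h, Finset.sum_mul, Matrix.sum_apply]
    refine Finset.sum_congr rfl fun k _ => ?_
    rw [mul_sub, Matrix.sub_apply, smul_mul_smul_comm, mul_one, ← pow_succ, smul_mul_assoc]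
    rfl
  simp only [h1]
  rw [integral_finsetSum]
  · rw [Finset.sum_mul, ← Finset.sum_sub_distrib, Matrix.sum_apply]
    refine Finset.sum_congr rfl fun k _ => ?_
    rw [integral_sub (aux_int μ K hK hKc _ (by fun_prop)) (aux_int μ K hK hKc _ (by fun_prop)),
      integral_mul_const, integral_mul_const, smul_mul_assoc]
    rfl
  · intro k _
    exact aux_int μ K hK hKc _ (by fun_prop)

lemma aux_unit {R : Type*} [Ring R] [Algebra ℝ R] (A : R) (t : ℕ) (ht : 1 ≤ t) (hA : A ^ t = 0)
    (a : ℕ → ℝ) (ha : a 0 = 1) : IsUnit (∑ i ∈ Finset.range t, a i • A ^ i) := by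
  obtain ⟨s, rfl⟩ : ∃ s, t = s + 1 := ⟨t - 1, by omega⟩
  rw [Finset.sum_range_succ', ha, one_smul, pow_zero]
  apply IsNilpotent.isUnit_add_one
  have h : ∑ i ∈ Finset.range s, a (i + 1) • A ^ (i + 1)
      = A * ∑ i ∈ Finset.range s, a (i + 1) • A ^ i := by
    rw [Finset.mul_sum]
    refine Finset.sum_congr rfl fun k _ => ?_
    rw [mul_smul_comm, pow_succ']
  rw [h]
  apply Commute.isNilpotent_mul_right
  · apply Commute.sum_right
    intro k _
    exact ((Commute.refl A).pow_right k).smul_right _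
  · exact ⟨_, hA⟩

lemma aux_mom (μ : Measure ℝ) [IsProbabilityMeasure μ]
    (K : Set ℝ) (hK : IsCompact K) (hKc : μ Kᶜ = 0)
    (H : ℕ → Polynomial ℝ) (γ : ℕ → ℝ)
    (hH0 : H 0 = 1)
    (hγ : ∀ n : ℕ, 1 ≤ n → γ n = ∫ x, x * (H (n - 1)).eval x ∂μ)
    (hHrec : ∀ n : ℕ, 1 ≤ n → H n = Polynomial.X * H (n - 1) - Polynomial.C (γ n)) (n : ℕ) :
    ∑ k ∈ Finset.range (n + 1), (∫ x, x ^ k ∂μ) * γ (n - k + 1) = ∫ x, x ^ (n + 1) ∂μ := by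
  have hrec : ∀ n x, (H (n + 1)).eval x = x * (H n).eval x - γ (n + 1) := by
    intro n x
    rw [hHrec (n + 1) (by omega)]
    simp
  have h1 : ∀ n : ℕ, ∀ x : ℝ, x * (H n).eval x
      = x ^ (n + 1) - ∑ k ∈ Finset.range n, x ^ (k + 1) * γ (n - k) := by
    intro n x
    induction n with
    | zero => simp [hH0]
    | succ n ih =>
      rw [hrec, ih, Finset.sum_range_succ']
      have : ∑ k ∈ Finset.range n, x ^ (k + 1 + 1) * γ (n + 1 - (k + 1))
          = x * ∑ k ∈ Finset.range n, x ^ (k + 1) * γ (n - k) := by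
        rw [Finset.mul_sum]
        refine Finset.sum_congr rfl fun k _ => ?_
        rw [Nat.add_sub_add_right]
        ring
      rw [this]
      simp only [Nat.sub_zero]
      ring
  have h2 := hγ (n + 1) (by omega)
  simp only [Nat.add_sub_cancel, h1] at h2
  rw [integral_sub (aux_int μ K hK hKc _ (by fun_prop)) (aux_int μ K hK hKc _ (by fun_prop)),
    integral_finsetSum _ (fun k _ => aux_int μ K hK hKc _ (by fun_prop))] at h2
  simp only [integral_mul_const] at h2
  rw [Finset.sum_range_succ']
  have h3 : ∑ k ∈ Finset.range n, (∫ x, x ^ (k + 1) ∂μ) * γ (n - (k + 1) + 1)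
      = ∑ k ∈ Finset.range n, (∫ x, x ^ (k + 1) ∂μ) * γ (n - k) := by
    refine Finset.sum_congr rfl fun k hk => ?_
    rw [Finset.mem_range] at hk
    rw [show n - (k + 1) + 1 = n - k by omega]
  rw [h3]
  simp only [pow_zero, Nat.sub_zero, integral_const, probReal_univ, smul_eq_mul, one_mul]
  linarith

theorem stmt16 (μ : Measure ℝ) [IsProbabilityMeasure μ]
    (K : Set ℝ) (hK : IsCompact K) (hKc : μ Kᶜ = 0)
    (H : ℕ → Polynomial ℝ) (γ : ℕ → ℝ)
    (hH0 : H 0 = 1)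
    (hγ : ∀ n : ℕ, 1 ≤ n → γ n = ∫ x, x * (H (n - 1)).eval x ∂μ)
    (hHrec : ∀ n : ℕ, 1 ≤ n → H n = Polynomial.X * H (n - 1) - Polynomial.C (γ n))
    (t : ℕ) (ht : 1 ≤ t)
    (Φ : Matrix (Fin t) (Fin t) ℝ)
    (hΦ : ∀ i j : Fin t, i ≤ j → Φ i j = 0)
    (M Cm : Matrix (Fin t) (Fin t) ℝ)
    (hM : M = ∑ i ∈ Finset.range t, (∫ x, x ^ i ∂μ) • Φ ^ i)
    (hCm : Cm = M⁻¹ * ∑ i ∈ Finset.range t, (∫ x, x ^ (i + 1) ∂μ) • Φ ^ i) :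
    IsUnit M ∧
    (∀ i j : Fin t,
        (∫ x, (((1 : Matrix (Fin t) (Fin t) ℝ) - x • Φ)⁻¹ *
            (x • (1 : Matrix (Fin t) (Fin t) ℝ) - Cm)) i j ∂μ) = 0) ∧
    (∀ C' : Matrix (Fin t) (Fin t) ℝ,
        (∀ i j : Fin t,
          (∫ x, (((1 : Matrix (Fin t) (Fin t) ℝ) - x • Φ)⁻¹ *
              (x • (1 : Matrix (Fin t) (Fin t) ℝ) - C')) i j ∂μ) = 0) →
        C' = Cm) ∧
    Cm = ∑ i ∈ Finset.range t, γ (i + 1) • Φ ^ i := by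
  have hn := aux_nil Φ hΦ
  have hu : IsUnit M := by
    rw [hM]
    exact aux_unit Φ t ht hn (fun i => ∫ x, x ^ i ∂μ) (by simp)
  have hdet : IsUnit M.det := (Matrix.isUnit_iff_isUnit_det M).1 hu
  have hint := aux_integral μ K hK hKc Φ hn
  rw [← hM] at hint
  refine ⟨hu, ?_, ?_, ?_⟩
  · intro i j
    rw [hint, hCm, Matrix.mul_nonsing_inv_cancel_left _ _ hdet, sub_self]
    rfl
  · intro C' hC'
    have h0 : (∑ i ∈ Finset.range t, (∫ x, x ^ (i + 1) ∂μ) • Φ ^ i) - M * C' = 0 := by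
      ext i j
      rw [← hint, hC']
      rfl
    rw [hCm, sub_eq_zero.1 h0, Matrix.nonsing_inv_mul_cancel_left _ _ hdet]
  · have h0 : M * ∑ i ∈ Finset.range t, γ (i + 1) • Φ ^ i
        = ∑ i ∈ Finset.range t, (∫ x, x ^ (i + 1) ∂μ) • Φ ^ i := by
      rw [hM, aux_mul Φ t hn (fun i => ∫ x, x ^ i ∂μ) (fun i => γ (i + 1))]
      refine Finset.sum_congr rfl fun n _ => ?_
      rw [aux_mom μ K hK hKc H γ hH0 hγ hHrec n]
    rw [hCm, ← h0, Matrix.nonsing_inv_mul_cancel_left _ _ hdet]
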